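/- Let D be a rich anonymous tree-single-peaked domain for a marriage market with n ≥ 5 men and n women. Then no stable matching rule on D is non-bossy. -/

import Mathlib

/-- `r` is a (strict) preference, i.e., a strict total order. -/
def IsPref {X : Type*} (r : X → X → Prop) : Prop := IsStrictTotalOrder X r

/-- `x` is the top (most preferred) element of `r`. -/
def TopOf {X : Type*} (r : X → X → Prop) (x : X) : Prop := ∀ y, y ≠ x → r x y

/-- `a` lies on the (unique) path from `x` to `y` in `G`. -/
def OnPath {X : Type*} (G : SimpleGraph X) (a x y : X) : Prop :=
  ∀ p : G.Walk x y, p.IsPath → a ∈ p.support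

/-- Single-peakedness with respect to a tree `G`. -/
def SPTree {X : Type*} (G : SimpleGraph X) (r : X → X → Prop) : Prop :=
  ∀ t a b, TopOf r t → OnPath G a t b → a = b ∨ r a b

/-- Classical single-peakedness with respect to a strict linear order `lt`. -/
def SPLine {X : Type*} (lt r : X → X → Prop) : Prop :=
  ∀ t x y, TopOf r t → (((x = t ∨ lt t x) ∧ lt x y) ∨ (lt y x ∧ (x = t ∨ lt x t))) → r x y

/-- Richness: every alternative is the top of some admissible preference. -/
def Rich {X : Type*} (D : Set (X → X → Prop)) : Prop := ∀ x, ∃ P ∈ D, TopOf P x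

/-- Top dominance property. -/
def TD {X : Type*} (D : Set (X → X → Prop)) : Prop :=
  ∀ x y z : X, (∃ P ∈ D, P x y ∧ P y z) → ¬ ∃ P ∈ D, P x z ∧ P z y

/-- Rotation property. -/
def Rotation {X : Type*} (D : Set (X → X → Prop)) : Prop :=
  ∀ x y z t : X, (∃ P ∈ D, P x y ∧ P y z ∧ P z t) → ¬ ∃ P ∈ D, P z x ∧ P x t

/-- `G` is a path graph (linear tree) on `k` vertices. -/
def IsPathG {X : Type*} (G : SimpleGraph X) (k : ℕ) : Prop :=
  ∃ e : X ≃ Fin k, ∀ a b, G.Adj a b ↔ ((e a : ℕ) + 1 = e b ∨ (e b : ℕ) + 1 = e a)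

/-- `G` is a star graph: some center adjacent to all other vertices, no other edges. -/
def IsStarG {X : Type*} (G : SimpleGraph X) : Prop :=
  ∃ c, ∀ a b, G.Adj a b ↔ a ≠ b ∧ (a = c ∨ b = c)

/-- A preference relation over the `n` agents of the opposite side. -/
abbrev PrefRel (n : ℕ) := Fin n → Fin n → Prop

/-- A preference profile: one preference (over women) per man, one (over men) per woman. -/
abbrev Profile (n : ℕ) := (Fin n → PrefRel n) × (Fin n → PrefRel n)

/-- Membership in the anonymous product domain with men's set `Dm` and women's set `Dw`. -/
def InDomain {n : ℕ} (Dm Dw : Set (PrefRel n)) (p : Profile n) : Prop :=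
  (∀ m, p.1 m ∈ Dm) ∧ (∀ w, p.2 w ∈ Dw)

/-- Pair `(m, w)` blocks matching `μ` at profile `p`. -/
def Blocks {n : ℕ} (p : Profile n) (μ : Fin n ≃ Fin n) (m w : Fin n) : Prop :=
  p.1 m w (μ m) ∧ p.2 w m (μ.symm w)

/-- Matching `μ` is stable at profile `p`. -/
def StableAt {n : ℕ} (p : Profile n) (μ : Fin n ≃ Fin n) : Prop := ∀ m w, ¬ Blocks p μ m w

/-- The matching rule `φ` is stable on the domain. -/
def StableRule {n : ℕ} (Dm Dw : Set (PrefRel n)) (φ : Profile n → (Fin n ≃ Fin n)) : Prop :=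
  ∀ p, InDomain Dm Dw p → StableAt p (φ p)

/-- Strategy-proofness on the domain: no unilateral in-domain misreport gives a strictly
better match. -/
def SP {n : ℕ} (Dm Dw : Set (PrefRel n)) (φ : Profile n → (Fin n ≃ Fin n)) : Prop :=
  ∀ p, InDomain Dm Dw p →
    (∀ m P', P' ∈ Dm → ¬ p.1 m (φ (Function.update p.1 m P', p.2) m) (φ p m)) ∧
    (∀ w P', P' ∈ Dw → ¬ p.2 w ((φ (p.1, Function.update p.2 w P')).symm w) ((φ p).symm w))

/-- Non-bossiness: a unilateral report change leaving one's own match unchanged leaves the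
whole matching unchanged. -/
def NonBossy {n : ℕ} (Dm Dw : Set (PrefRel n)) (φ : Profile n → (Fin n ≃ Fin n)) : Prop :=
  ∀ p, InDomain Dm Dw p →
    (∀ m P', P' ∈ Dm → φ (Function.update p.1 m P', p.2) m = φ p m →
       φ (Function.update p.1 m P', p.2) = φ p) ∧
    (∀ w P', P' ∈ Dw → (φ (p.1, Function.update p.2 w P')).symm w = (φ p).symm w →
       φ (p.1, Function.update p.2 w P') = φ p)

/-- Man `m` is weakly better off under `μ'` than under `μ` (true preferences from `p`). -/
def MWeakBetter {n : ℕ} (p : Profile n) (μ μ' : Fin n ≃ Fin n) (m : Fin n) : Prop :=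
  μ' m = μ m ∨ p.1 m (μ' m) (μ m)

/-- Woman `w` is weakly better off under `μ'` than under `μ`. -/
def WWeakBetter {n : ℕ} (p : Profile n) (μ μ' : Fin n ≃ Fin n) (w : Fin n) : Prop :=
  μ'.symm w = μ.symm w ∨ p.2 w (μ'.symm w) (μ.symm w)

/-- Group strategy-proofness on the domain. -/
def GSP {n : ℕ} (Dm Dw : Set (PrefRel n)) (φ : Profile n → (Fin n ≃ Fin n)) : Prop :=
  ∀ p, InDomain Dm Dw p →
    ¬ ∃ (p' : Profile n) (S : Set (Fin n ⊕ Fin n)),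
      InDomain Dm Dw p' ∧
      (∀ m, Sum.inl m ∉ S → p'.1 m = p.1 m) ∧
      (∀ w, Sum.inr w ∉ S → p'.2 w = p.2 w) ∧
      (∀ m, Sum.inl m ∈ S → MWeakBetter p (φ p) (φ p') m) ∧
      (∀ w, Sum.inr w ∈ S → WWeakBetter p (φ p) (φ p') w) ∧
      ((∃ m, Sum.inl m ∈ S ∧ p.1 m (φ p' m) (φ p m)) ∨
       (∃ w, Sum.inr w ∈ S ∧ p.2 w ((φ p').symm w) ((φ p).symm w)))

/-! In a tree with at least five vertices some vertex `a` separates two others even after the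
runner-up `d` of a preference with top `a` is set aside. Single-peakedness then produces two
admissible preferences `a ≻ d ≻ b ≻ c` and `b ≻ ⋯ ≻ a ≻ ⋯ ≻ c`. Doing this on both sides of the
market, give these preferences to two men and two women who form a `2 × 2` market with opposed
interests, and let all the other agents pair off as mutual tops. The rule must select one of the
two stable matchings. If it selects the men-optimal one, a third man who also claims the top woman
of the first man starts a chain of rejections: he displaces the first man, who displaces the
second man, who takes the top woman back. The third man ends up with his old partner while the
first two men have swapped theirs, so the rule is bossy. The women-optimal case is the same with
the two sides exchanged.
-/

/-! ### Separation in finite trees -/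

section Tree

variable {V : Type*} {G : SimpleGraph V} {a b c v : V}

theorem not_onPath_iff : ¬ OnPath G a b c ↔ ∃ p : G.Walk b c, a ∉ p.support := by
  classical
  refine ⟨fun h ↦ ?_, fun ⟨p, hp⟩ h ↦ ?_⟩
  · simp only [OnPath, not_forall] at h
    obtain ⟨p, -, hp⟩ := h
    exact ⟨p, hp⟩
  · exact hp (p.support_bypass_subset_support (h p.bypass p.bypass_isPath))

theorem OnPath.symm (h : OnPath G a b c) : OnPath G a c b := fun p hp ↦ by
  simpa using h p.reverse hp.reverse

theorem not_onPath_trans {w : V} (h₁ : ¬ OnPath G a b c) (h₂ : ¬ OnPath G a c w) :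
    ¬ OnPath G a b w := by
  obtain ⟨p, hp⟩ := not_onPath_iff.1 h₁
  obtain ⟨q, hq⟩ := not_onPath_iff.1 h₂
  exact not_onPath_iff.2 ⟨p.append q, by simp [SimpleGraph.Walk.mem_support_append_iff, hp, hq]⟩

theorem exists_adj_not_onPath (hG : G.Preconnected) (hva : v ≠ a) :
    ∃ g, G.Adj a g ∧ ¬ OnPath G a v g := by
  obtain ⟨p, hp⟩ := (hG a v).exists_isPath
  cases p with
  | nil => exact absurd rfl hva
  | @cons _ g _ hag q =>
    have haq : a ∉ q.support := ((SimpleGraph.Walk.cons_isPath_iff hag q).1 hp).2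
    exact ⟨g, hag, not_onPath_iff.2 ⟨q.reverse, by simpa using haq⟩⟩

theorem onPath_or_onPath_of_adj (hG : G.IsAcyclic) (hab : G.Adj a b) (v : V) :
    OnPath G a v b ∨ OnPath G b v a := by
  by_contra! h
  obtain ⟨p, hp⟩ := not_onPath_iff.1 h.1
  obtain ⟨q, hq⟩ := not_onPath_iff.1 h.2
  have hbridge : G.IsBridge s(a, b) := SimpleGraph.isAcyclic_iff_forall_adj_isBridge.1 hG hab
  have hmem : s(a, b) ∈ (q.reverse.append p).edges :=
    SimpleGraph.isBridge_iff_forall_walk_mem_edges.1 hbridge _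
  rw [SimpleGraph.Walk.edges_append, List.mem_append, SimpleGraph.Walk.edges_reverse,
    List.mem_reverse] at hmem
  exact hmem.elim (fun he ↦ hq (q.snd_mem_support_of_mem_edges he))
    fun he ↦ hp (p.fst_mem_support_of_mem_edges he)

theorem exists_apply_apply_eq_self [Finite V] (hG : G.IsTree) {g : V → V}
    (hg : ∀ a, G.Adj a (g a)) : ∃ a, g (g a) = a := by
  classical
  have := Fintype.ofFinite V
  -- There are more vertices than edges, so `s(a, g a) = s(b, g b)` for some `a ≠ b`.
  have hcard : G.edgeFinset.card < (Finset.univ : Finset V).card := by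
    rw [Finset.card_univ, ← hG.card_edgeFinset]
    exact Nat.lt_succ_self _
  obtain ⟨a, -, b, -, hab, he⟩ := Finset.exists_ne_map_eq_of_card_lt_of_maps_to hcard
    (f := fun a ↦ s(a, g a)) fun a _ ↦ by simpa using hg a
  obtain ⟨hba, -⟩ | ⟨hagb, hgab⟩ := Sym2.eq_iff.1 he
  · exact absurd hba hab
  · exact ⟨a, hgab ▸ hagb.symm⟩

theorem exists_onPath_avoiding [Fintype V] (hV : 5 ≤ Fintype.card V) (hG : G.IsTree)
    (f : V → V) : ∃ a b c, b ∉ ({a, f a} : Set V) ∧ c ∉ ({a, f a} : Set V) ∧ OnPath G a b c := by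
  classical
  by_contra! hsep
  have hnbr (a : V) : ∃ g, G.Adj a g ∧ ∀ v ∉ ({a, f a} : Set V), ¬ OnPath G a v g := by
    obtain ⟨z, -, hz⟩ : ∃ z ∈ Finset.univ, z ∉ ({a, f a} : Finset V) :=
      Finset.exists_mem_notMem_of_card_lt_card <| Finset.card_le_two.trans_lt <| by
        rw [Finset.card_univ]; lia
    obtain ⟨g, hag, hzg⟩ := exists_adj_not_onPath hG.connected.preconnected (v := z) (a := a)
      fun h ↦ hz (by simp [h])
    exact ⟨g, hag, fun v hv ↦ not_onPath_trans (hsep a v z hv (by simpa using hz)) hzg⟩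
  choose g hadj hg using hnbr
  obtain ⟨a, ha⟩ := exists_apply_apply_eq_self hG hadj
  obtain ⟨v, -, hv⟩ : ∃ v ∈ Finset.univ, v ∉ ({a, f a, g a, f (g a)} : Finset V) :=
    Finset.exists_mem_notMem_of_card_lt_card <| Finset.card_le_four.trans_lt <| by
      rwa [Finset.card_univ]
  simp only [Finset.mem_insert, Finset.mem_singleton, not_or] at hv
  obtain h | h := onPath_or_onPath_of_adj hG.isAcyclic (hadj a) v
  · exact hg a v (by simp [hv]) h
  · exact hg (g a) v (by simp [hv]) (ha.symm ▸ h)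

end Tree

/-! ### Exchange patterns in single-peaked domains -/

section Domain

variable {X : Type*}

/-- The preferences `P` and `Q` disagree on `a` and `b` as an opposed `2 × 2` market requires: `P`
starts with `a` and ranks `d ≻ b ≻ c`, while `Q` starts with `b` and ranks `a ≻ c`. The alternatives
`c` and `d` are the spare partners used by the two chains of rejections. -/
structure ExchangePattern (P Q : X → X → Prop) (a b c d : X) : Prop where
  nodup : [a, b, c, d].Nodup
  top_left : TopOf P a
  top_right : TopOf Q b
  left_db : P d b
  left_bc : P b c
  right_ac : Q a c

/-- Some two preferences of the domain `D` form an exchange pattern. This is what makes a rich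
domain large enough for every stable rule to be bossy. -/
def HasExchangePattern (D : Set (X → X → Prop)) : Prop :=
  ∃ P ∈ D, ∃ Q ∈ D, ∃ a b c d, ExchangePattern P Q a b c d

theorem IsPref.exists_best [Finite X] {P : X → X → Prop} (hP : IsPref P) {s : Set X}
    (hs : s.Nonempty) : ∃ d ∈ s, ∀ v ∈ s, v ≠ d → P d v := by
  have : IsStrictTotalOrder X P := hP
  obtain ⟨d, hd, hmin⟩ := (Finite.wellFounded_of_trans_of_irrefl P).has_min s hs
  exact ⟨d, hd, fun v hv hvd ↦
    ((trichotomous_of P d v).resolve_right fun h ↦ h.elim (hvd ·.symm) (hmin v hv))⟩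

theorem hasExchangePattern_of_spTree [Fintype X] (hX : 5 ≤ Fintype.card X)
    {D : Set (X → X → Prop)} (hD : ∀ P ∈ D, IsPref P) (hrich : Rich D) {G : SimpleGraph X}
    (hG : G.IsTree) (hsp : ∀ P ∈ D, SPTree G P) : HasExchangePattern D := by
  have : Nontrivial X := Fintype.one_lt_card_iff_nontrivial.1 (by lia)
  choose P hPD hPtop using hrich
  choose d hda hd using fun a ↦ (hD (P a) (hPD a)).exists_best (Set.nonempty_compl_of_nontrivial a)
  obtain ⟨a, b, c, hb, hc, hbc, hPbc⟩ :
      ∃ a b c, b ∉ ({a, d a} : Set X) ∧ c ∉ ({a, d a} : Set X) ∧ OnPath G a b c ∧ P a b c := by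
    obtain ⟨a, b, c, hb, hc, hbc⟩ := exists_onPath_avoiding hX hG d
    have hne : b ≠ c := by
      rintro rfl
      exact hb (.inl (by simpa [eq_comm] using hbc .nil .nil))
    have : IsStrictTotalOrder X (P a) := hD _ (hPD a)
    obtain h | h | h := trichotomous_of (P a) b c
    exacts [⟨a, b, c, hb, hc, hbc, h⟩, absurd h hne, ⟨a, c, b, hc, hb, hbc.symm, h⟩]
  have : IsStrictTotalOrder X (P a) := hD _ (hPD a)
  simp only [Set.mem_insert_iff, Set.mem_singleton_iff, not_or] at hb hc
  refine ⟨P a, hPD a, P b, hPD b, a, b, c, d a, ?_, hPtop a, hPtop b, hd a b hb.1 hb.2, hPbc,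
    (hsp _ (hPD b) b a c (hPtop b) hbc).resolve_left (Ne.symm hc.1)⟩
  simp [Ne.symm hb.1, Ne.symm hc.1, Ne.symm (hda a), ne_of_irrefl hPbc, hb.2, hc.2]

theorem Rich.exists_family {ι : Type*} {D : Set (X → X → Prop)} (hD : Rich D)
    {P Q : X → X → Prop} (hP : P ∈ D) (hQ : Q ∈ D) {i j : ι} (hij : i ≠ j) (t : ι → X) :
    ∃ F : ι → X → X → Prop, (∀ k, F k ∈ D) ∧ F i = P ∧ F j = Q ∧
      ∀ k, k ≠ i → k ≠ j → TopOf (F k) (t k) := by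
  classical
  choose T hTD hTtop using hD
  have hmem {F : ι → X → X → Prop} (hF : ∀ k, F k ∈ D) {R : X → X → Prop} (hR : R ∈ D) (l : ι) :
      ∀ k, Function.update F l R k ∈ D :=
    (Function.forall_update_iff F fun _ R ↦ R ∈ D).2 ⟨hR, fun k _ ↦ hF k⟩
  exact ⟨Function.update (Function.update (T ∘ t) i P) j Q, hmem (hmem (fun k ↦ hTD (t k)) hP i)
    hQ j, by simp [hij], by simp, fun k hi hj ↦ by simpa [hi, hj] using hTtop (t k)⟩

end Domain

/-! ### Bijections agreeing off a set -/

section Bijection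

variable {α β : Type*}

theorem mapsTo_image_of_eqOn_compl {f g : α → β} (hf : f.Injective) (hg : g.Surjective)
    {s : Set α} (h : Set.EqOn f g sᶜ) : Set.MapsTo f s (g '' s) := by
  intro x hx
  obtain ⟨y, hy⟩ := hg (f x)
  by_contra hfx
  have hys : y ∉ s := fun hys ↦ hfx ⟨y, hys, hy⟩
  exact hys (hf ((h hys).trans hy) ▸ hx)

theorem eq_or_swap_of_eqOn_compl_pair {f g : α → β} (hf : f.Injective) (hg : g.Surjective)
    {x y : α} (hxy : x ≠ y) (h : Set.EqOn f g {x, y}ᶜ) :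
    (f x = g x ∧ f y = g y) ∨ (f x = g y ∧ f y = g x) := by
  have hmaps := mapsTo_image_of_eqOn_compl hf hg h
  have hx := hmaps (Set.mem_insert x {y})
  have hy := hmaps (Set.mem_insert_of_mem x rfl)
  simp only [Set.image_pair, Set.mem_insert_iff, Set.mem_singleton_iff] at hx hy
  have := hf.ne hxy
  grind

theorem exists_perm_map_eq {l l' : List α} (hl : l.Nodup) (hl' : l'.Nodup)
    (hlen : l.length = l'.length) : ∃ σ : Equiv.Perm α, l.map σ = l' := by
  let x : Fin l.length ↪ α := ⟨l.get, hl.injective_get⟩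
  let y : Fin l.length ↪ α := ⟨l'.get ∘ Fin.cast hlen,
    hl'.injective_get.comp (Fin.cast_injective hlen)⟩
  have := Equiv.Perm.isMultiplyPretransitive α l.length
  obtain ⟨σ, hσ⟩ := MulAction.exists_smul_eq (Equiv.Perm α) x y
  refine ⟨σ, List.ext_get (by simpa using hlen) fun i hi _ ↦ ?_⟩
  simpa [x, y] using DFunLike.congr_fun hσ ⟨i, by simpa using hi⟩

end Bijection

/-! ### Stability and the exchange of the two sides -/

section Market

variable {n : ℕ} {Dm Dw : Set (PrefRel n)} {p : Profile n} {μ ν σ : Fin n ≃ Fin n}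
  {φ : Profile n → (Fin n ≃ Fin n)} {m m₁ m₂ m₃ m₄ w : Fin n}

theorem StableAt.swap (h : StableAt p μ) : StableAt p.swap μ.symm :=
  fun w m hb ↦ h m w ⟨hb.2, hb.1⟩

theorem StableAt.not_prefers_of_topOf_left (h : StableAt p μ) (hm : TopOf (p.1 m) w)
    (hne : μ m ≠ w) : ¬ p.2 w m (μ.symm w) :=
  fun hw ↦ h m w ⟨hm _ hne, hw⟩

theorem StableAt.not_prefers_of_topOf_right (h : StableAt p μ) (hw : TopOf (p.2 w) m)
    (hne : μ m ≠ w) : ¬ p.1 m w (μ m) :=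
  h.swap.not_prefers_of_topOf_left hw fun h ↦ hne (by simp [← h])

theorem StableAt.apply_eq_of_topOf (h : StableAt p μ) (hm : TopOf (p.1 m) w)
    (hw : TopOf (p.2 w) m) : μ m = w :=
  by_contra fun hne ↦ h.not_prefers_of_topOf_right hw hne (hm _ hne)

theorem InDomain.swap (hp : InDomain Dm Dw p) : InDomain Dw Dm p.swap := ⟨hp.2, hp.1⟩

theorem InDomain.update_left (hp : InDomain Dm Dw p) {P : PrefRel n} (hP : P ∈ Dm) (m : Fin n) :
    InDomain Dm Dw (Function.update p.1 m P, p.2) :=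
  ⟨(Function.forall_update_iff _ fun _ R ↦ R ∈ Dm).2 ⟨hP, fun i _ ↦ hp.1 i⟩, hp.2⟩

/-- The matching rule `φ` after men and women have exchanged roles. -/
def dualRule (φ : Profile n → (Fin n ≃ Fin n)) : Profile n → (Fin n ≃ Fin n) :=
  fun p ↦ (φ p.swap).symm

theorem StableRule.dual (h : StableRule Dm Dw φ) : StableRule Dw Dm (dualRule φ) :=
  fun p hp ↦ (h p.swap hp.swap).swap

theorem NonBossy.dual (h : NonBossy Dm Dw φ) : NonBossy Dw Dm (dualRule φ) := fun p hp ↦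
  ⟨fun w P hP hw ↦ congrArg Equiv.symm ((h p.swap hp.swap).2 w P hP hw),
    fun m P hP hm ↦ congrArg Equiv.symm ((h p.swap hp.swap).1 m P hP hm)⟩

/-! ### Rejection cycles -/

/-- If `m₃` imitates the preference of `m₁`, he displaces `m₁` at `μ m₁`, then `m₁` displaces `m₂`
at `μ m₂`, and `m₂` displaces `m₃` at `μ m₁`. All the other men are matched by `μ` to their mutual
tops and stay put. -/
structure RejectionCycle (p : Profile n) (μ : Fin n ≃ Fin n) (m₁ m₂ m₃ : Fin n) : Prop where
  nodup : [m₁, m₂, m₃].Nodup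
  man₁_top : TopOf (p.1 m₁) (μ m₁)
  man₁_prefers : p.1 m₁ (μ m₂) (μ m₃)
  man₂_prefers : p.1 m₂ (μ m₁) (μ m₃)
  woman₁_top : TopOf (p.2 (μ m₁)) m₂
  woman₁_prefers : p.2 (μ m₁) m₃ m₁
  woman₂_top : TopOf (p.2 (μ m₂)) m₁
  others_top : ∀ m ∉ ({m₁, m₂, m₃} : Set (Fin n)), TopOf (p.1 m) (μ m) ∧ TopOf (p.2 (μ m)) m

theorem RejectionCycle.eq_of_stableAt_update (h : RejectionCycle p μ m₁ m₂ m₃)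
    (hν : StableAt (Function.update p.1 m₃ (p.1 m₁), p.2) ν) : ν m₁ = μ m₂ ∧ ν m₃ = μ m₃ := by
  have hnodup := h.nodup
  simp only [List.nodup_cons, List.mem_cons, List.not_mem_nil, not_or, not_false_eq_true] at hnodup
  obtain ⟨⟨h₁₂, h₁₃, -⟩, ⟨h₂₃, -⟩, -⟩ := hnodup
  have hoff : Set.EqOn ν μ {m₁, m₂, m₃}ᶜ := fun m hm ↦
    have hm₃ : m ≠ m₃ := fun h ↦ hm (by simp [h])
    hν.apply_eq_of_topOf (by simpa [hm₃] using (h.others_top m hm).1) (h.others_top m hm).2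
  have hmaps := mapsTo_image_of_eqOn_compl ν.injective μ.surjective hoff
  simp only [Set.MapsTo, Set.image_insert_eq, Set.image_singleton, Set.mem_insert_iff,
    Set.mem_singleton_iff, forall_eq_or_imp, forall_eq] at hmaps
  have hm₁w₁ : ν m₁ ≠ μ m₁ := fun he ↦
    hν.not_prefers_of_topOf_left (m := m₃) (w := μ m₁) (by simpa using h.man₁_top)
      (fun he' ↦ h₁₃ (ν.injective (he.trans he'.symm))) (by simpa [← he] using h.woman₁_prefers)
  have hm₁w₃ : ν m₁ ≠ μ m₃ := fun he ↦
    hν.not_prefers_of_topOf_right h.woman₂_top (by simp [he, Ne.symm h₂₃])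
      (by simpa [he, h₁₃] using h.man₁_prefers)
  have hm₂w₃ : ν m₂ ≠ μ m₃ := fun he ↦
    hν.not_prefers_of_topOf_right h.woman₁_top (by simp [he, Ne.symm h₁₃])
      (by simpa [he, h₂₃] using h.man₂_prefers)
  have hν₁ : ν m₁ = μ m₂ := (hmaps.1.resolve_left hm₁w₁).resolve_right hm₁w₃
  have hν₂ : ν m₂ = μ m₁ := hmaps.2.1.resolve_right fun he ↦
    he.elim (fun he ↦ h₁₂ (ν.injective (hν₁.trans he.symm))) hm₂w₃
  have hm₃w₁ : ν m₃ ≠ μ m₁ := fun he ↦ h₂₃ (ν.injective (hν₂.trans he.symm))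
  have hm₃w₂ : ν m₃ ≠ μ m₂ := fun he ↦ h₁₃ (ν.injective (hν₁.trans he.symm))
  exact ⟨hν₁, (hmaps.2.2.resolve_left hm₃w₁).resolve_left hm₃w₂⟩

theorem NonBossy.not_rejectionCycle (hnb : NonBossy Dm Dw φ) (hst : StableRule Dm Dw φ)
    (hp : InDomain Dm Dw p) : ¬ RejectionCycle p (φ p) m₁ m₂ m₃ := fun h ↦ by
  obtain ⟨hm₁, hm₃⟩ := h.eq_of_stableAt_update (hst _ (hp.update_left (hp.1 m₁) m₃))
  rw [(hnb p hp).1 m₃ _ (hp.1 m₁) hm₃] at hm₁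
  have hnodup := h.nodup
  simp [(φ p).injective hm₁] at hnodup

/-! ### The exchange profile -/

/-- The profile on which the rule is bossy: exchange patterns make `{m₁, m₂}` and `{σ m₁, σ m₂}` an
opposed `2 × 2` market, and `σ` pairs all the other agents as mutual tops. The women's pattern lists
`m₂` before `m₁` because `σ m₁` has `m₂` as her top. -/
structure ExchangeProfile (p : Profile n) (σ : Fin n ≃ Fin n) (m₁ m₂ m₃ m₄ : Fin n) : Prop where
  men : ExchangePattern (p.1 m₁) (p.1 m₂) (σ m₁) (σ m₂) (σ m₃) (σ m₄)
  women : ExchangePattern (p.2 (σ m₁)) (p.2 (σ m₂)) m₂ m₁ m₄ m₃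
  others_top : ∀ m ∉ ({m₁, m₂} : Set (Fin n)), TopOf (p.1 m) (σ m) ∧ TopOf (p.2 (σ m)) m

theorem exists_exchangeProfile (hrm : Rich Dm) (hrw : Rich Dw) (hm : HasExchangePattern Dm)
    (hw : HasExchangePattern Dw) :
    ∃ p σ m₁ m₂ m₃ m₄, InDomain Dm Dw p ∧ ExchangeProfile p σ m₁ m₂ m₃ m₄ := by
  obtain ⟨P, hP, Q, hQ, w₁, w₂, w₃, w₄, hPQ⟩ := hm
  obtain ⟨R, hR, S, hS, m₂, m₁, m₄, m₃, hRS⟩ := hw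
  have hperm : [w₁, w₂, w₃, w₄].Perm [w₂, w₁, w₄, w₃] :=
    (List.Perm.swap w₂ w₁ _).trans (((List.Perm.swap w₄ w₃ []).cons w₁).cons w₂)
  obtain ⟨σ, hσ⟩ := exists_perm_map_eq hRS.nodup (hperm.nodup hPQ.nodup) rfl
  obtain ⟨rfl, rfl, rfl, rfl⟩ : σ m₂ = w₂ ∧ σ m₁ = w₁ ∧ σ m₄ = w₄ ∧ σ m₃ = w₃ := by simpa using hσ
  have hm₁₂ : m₁ ≠ m₂ := by
    rintro rfl
    simpa using hRS.nodup
  obtain ⟨pm, hpm, rfl, rfl, hmtop⟩ := hrm.exists_family hP hQ hm₁₂ σ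
  obtain ⟨pw, hpw, rfl, rfl, hwtop⟩ := hrw.exists_family hR hS (σ.injective.ne hm₁₂) σ.symm
  refine ⟨(pm, pw), σ, m₁, m₂, m₃, m₄, ⟨hpm, hpw⟩, hPQ, hRS, fun m hm ↦ ?_⟩
  simp only [Set.mem_insert_iff, Set.mem_singleton_iff, not_or] at hm
  exact ⟨hmtop m hm.1 hm.2,
    by simpa using hwtop (σ m) (σ.injective.ne hm.1) (σ.injective.ne hm.2)⟩

theorem ExchangeProfile.rejectionCycle (h : ExchangeProfile p μ m₁ m₂ m₃ m₄) :
    RejectionCycle p μ m₁ m₂ m₃ where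
  nodup := by
    have := h.women.nodup
    grind
  man₁_top := h.men.top_left
  man₁_prefers := h.men.left_bc
  man₂_prefers := h.men.right_ac
  woman₁_top := h.women.top_left
  woman₁_prefers := h.women.left_db
  woman₂_top := h.women.top_right
  others_top m hm := h.others_top m (by grind)

theorem ExchangeProfile.rejectionCycle_swap (h : ExchangeProfile p σ m₁ m₂ m₃ m₄)
    (hμ : Set.EqOn μ σ {m₁, m₂}ᶜ) (hμ₁ : μ m₁ = σ m₂) (hμ₂ : μ m₂ = σ m₁) :
    RejectionCycle p.swap μ.symm (σ m₂) (σ m₁) (σ m₄) := by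
  have hnodup := h.women.nodup
  have hσ₁ : μ.symm (σ m₁) = m₂ := μ.symm_apply_eq.2 hμ₂.symm
  have hσ₂ : μ.symm (σ m₂) = m₁ := μ.symm_apply_eq.2 hμ₁.symm
  have hσ₄ : μ.symm (σ m₄) = m₄ := μ.symm_apply_eq.2 (hμ (by grind)).symm
  exact {
    nodup := List.Nodup.map σ.injective (l := [m₂, m₁, m₄]) (by grind)
    man₁_top := by simpa [hσ₂] using h.women.top_right
    man₁_prefers := by simpa [hσ₁, hσ₄] using h.women.right_ac
    man₂_prefers := by simpa [hσ₂, hσ₄] using h.women.left_bc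
    woman₁_top := by simpa [hσ₂] using h.men.top_left
    woman₁_prefers := by simpa [hσ₂] using h.men.left_db
    woman₂_top := by simpa [hσ₁] using h.men.top_right
    others_top := fun w hw ↦ by
      obtain ⟨m, rfl⟩ := σ.surjective w
      have hm : m ∉ ({m₁, m₂} : Set (Fin n)) := by grind
      simpa [μ.symm_apply_eq.2 (hμ hm).symm] using (h.others_top m hm).symm }

theorem ExchangeProfile.rejectionCycle_or (h : ExchangeProfile p σ m₁ m₂ m₃ m₄)
    (hμ : StableAt p μ) :
    RejectionCycle p μ m₁ m₂ m₃ ∨ RejectionCycle p.swap μ.symm (σ m₂) (σ m₁) (σ m₄) := by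
  have hoff : Set.EqOn μ σ {m₁, m₂}ᶜ := fun m hm ↦
    hμ.apply_eq_of_topOf (h.others_top m hm).1 (h.others_top m hm).2
  have hm₁₂ : m₁ ≠ m₂ := by
    rintro rfl
    simpa using h.women.nodup
  obtain ⟨hμ₁, hμ₂⟩ | ⟨hμ₁, hμ₂⟩ :=
    eq_or_swap_of_eqOn_compl_pair μ.injective σ.surjective hm₁₂ hoff
  · have hμσ : μ = σ := Equiv.ext fun m ↦ by
      by_cases hm : m ∈ ({m₁, m₂} : Set (Fin n))
      · obtain rfl | rfl := hm <;> assumption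
      · exact hoff hm
    exact .inl (hμσ ▸ h.rejectionCycle)
  · exact .inr (h.rejectionCycle_swap hoff hμ₁ hμ₂)

theorem StableRule.not_nonBossy_of_hasExchangePattern (hst : StableRule Dm Dw φ)
    (hrm : Rich Dm) (hrw : Rich Dw) (hm : HasExchangePattern Dm) (hw : HasExchangePattern Dw) :
    ¬ NonBossy Dm Dw φ := fun hnb ↦ by
  obtain ⟨p, σ, m₁, m₂, m₃, m₄, hp, h⟩ := exists_exchangeProfile hrm hrw hm hw
  obtain hcycle | hcycle := h.rejectionCycle_or (hst p hp)
  · exact hnb.not_rejectionCycle hst hp hcycle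
  · exact hnb.dual.not_rejectionCycle hst.dual hp.swap hcycle

end Market

/-- on a rich anonymous tree-single-peaked domain with n ≥ 5, no stable
matching rule is non-bossy. -/
theorem stmt15 {n : ℕ} (hn : 5 ≤ n) (Dm Dw : Set (PrefRel n))
    (hDm : ∀ P ∈ Dm, IsPref P) (hDw : ∀ P ∈ Dw, IsPref P)
    (hrm : Rich Dm) (hrw : Rich Dw)
    (Gw : SimpleGraph (Fin n)) (hGw : Gw.IsTree) (hspm : ∀ P ∈ Dm, SPTree Gw P)
    (Gm : SimpleGraph (Fin n)) (hGm : Gm.IsTree) (hspw : ∀ P ∈ Dw, SPTree Gm P)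
    (φ : Profile n → (Fin n ≃ Fin n)) (hst : StableRule Dm Dw φ) :
    ¬ NonBossy Dm Dw φ := by
  have hcard : 5 ≤ Fintype.card (Fin n) := by rwa [Fintype.card_fin]
  exact hst.not_nonBossy_of_hasExchangePattern hrm hrw
    (hasExchangePattern_of_spTree hcard hDm hrm hGw hspm)
    (hasExchangePattern_of_spTree hcard hDw hrw hGm hspw)
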